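/- Let F : H → H be Fréchet differentiable with derivative DF : H → L(H) continuous and bounded (sup_x ‖DF(x)‖ < ∞), let T > 0 and let g : [0,T] → H be continuous. For each x ∈ H let y(·,x) : [0,T] → H denote the unique continuous solution of y(t,x) = S(t)x + ∫₀ᵗ K(t−s) F(y(s,x)) ds + g(t). Then for every t ∈ [0,T] the map x ↦ y(t,x) is Fréchet differentiable, and for every h ∈ H its derivative in direction h equals η^h(t,x), where η^h(·,x) is the unique continuous solution of η(t) = S(t)h + ∫₀ᵗ K(t−s) ( DF(y(s,x)) · η(s) ) ds. -/

import Mathlib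

open Real MeasureTheory

noncomputable section

/-- `H = ℓ²(ℤ; ℝ)`, modelling `2π`-periodic `L²` functions via the trigonometric
orthonormal basis. -/
abbrev H : Type := lp (fun _ : ℤ => ℝ) 2

/-!
In the Banach space `C([0, T], E)` the equation reads `Ψ (y x) = S x + g` with
`Ψ u = u - V (F ∘ u)`, where `V` is the Volterra operator with kernel `K`. This `Ψ` is strictly
differentiable with derivative `1 - V M`, `M` being multiplication by `DF ∘ y x`. Conjugating with
the weight `exp (β t)` replaces the kernel `K r` by `exp (-β r) K r`, whose `L¹` norm tends to `0`
as `β → ∞`, so `1 - V M` is invertible. The inverse function theorem gives a local inverse of `Ψ`,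
and uniqueness identifies it with the solution map: the derivative of `x ↦ y x` in direction `h` is
`(1 - V M)⁻¹ (S h)`, the solution of the linearised equation. On `ℓ²(ℤ)` the kernel is integrable
because `‖K t‖ ≤ t ^ (-1 / 2)`.
-/

open Set Filter Topology Interval

section PointwiseOperators

variable {X 𝕜 E G : Type*} [TopologicalSpace X] [CompactSpace X]
  [NontriviallyNormedField 𝕜] [NormedAddCommGroup E] [NormedSpace 𝕜 E]
  [NormedAddCommGroup G] [NormedSpace 𝕜 G]

/-- The operator `C(X, E) → C(X, G)` which applies a continuous field `M` of bounded operators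
pointwise: `u ↦ (x ↦ M x (u x))`. -/
def pointwiseCLM (M : C(X, E →L[𝕜] G)) : C(X, E) →L[𝕜] C(X, G) :=
  LinearMap.mkContinuous
    { toFun := fun u => ⟨fun x => M x (u x), by fun_prop⟩
      map_add' := fun u v => by ext x; simp
      map_smul' := fun c u => by ext x; simp }
    ‖M‖ fun u => (ContinuousMap.norm_le _ (by positivity)).2 fun x =>
      (M x).le_of_opNorm_le_of_le (M.norm_coe_le_norm x) (u.norm_coe_le_norm x)

@[simp]
lemma pointwiseCLM_apply (M : C(X, E →L[𝕜] G)) (u : C(X, E)) (x : X) :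
    pointwiseCLM M u x = M x (u x) :=
  rfl

lemma norm_pointwiseCLM_le (M : C(X, E →L[𝕜] G)) : ‖pointwiseCLM M‖ ≤ ‖M‖ :=
  LinearMap.mkContinuous_norm_le _ (norm_nonneg M) _

/-- A strongly continuous family `S` of bounded operators, indexed by a compact space, as the
single bounded operator `h ↦ (x ↦ S x h)` into the continuous functions. Boundedness comes from
the uniform boundedness principle. -/
def orbitCLM [CompleteSpace E] (S : X → E →L[𝕜] G) (hS : ∀ h, Continuous fun x => S x h) :
    E →L[𝕜] C(X, G) :=
  have hbdd : ∃ C, ∀ x, ‖S x‖ ≤ C := banach_steinhaus fun h =>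
    (isCompact_range (hS h)).isBounded.exists_norm_le.imp fun _ hC x => hC _ ⟨x, rfl⟩
  LinearMap.mkContinuousOfExistsBound
    { toFun := fun h => ⟨fun x => S x h, hS h⟩
      map_add' := fun h h' => by ext x; simp
      map_smul' := fun c h => by ext x; simp }
    (hbdd.elim fun C hC => ⟨|C|, fun h => (ContinuousMap.norm_le _ (by positivity)).2 fun x =>
      (S x).le_of_opNorm_le ((hC x).trans (le_abs_self C)) h⟩)

end PointwiseOperators

section InverseFunction

variable {𝕜 X P Z : Type*} [NontriviallyNormedField 𝕜] [NormedAddCommGroup X] [NormedSpace 𝕜 X]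
  [CompleteSpace X] [NormedAddCommGroup P] [NormedSpace 𝕜 P]
  [NormedAddCommGroup Z] [NormedSpace 𝕜 Z]

lemma hasFDerivAt_of_unique_solution {Ψ : X → P} {Ψ' : X ≃L[𝕜] P} {p : Z → P} {p' : Z →L[𝕜] P}
    {y : Z → X} {z₀ : Z} (hΨ : HasStrictFDerivAt Ψ (Ψ' : X →L[𝕜] P) (y z₀))
    (hp : HasFDerivAt p p' z₀) (hy : Ψ (y z₀) = p z₀)
    (hunique : ∀ z u, Ψ u = p z → u = y z) :
    HasFDerivAt y ((Ψ'.symm : P →L[𝕜] X) ∘L p') z₀ := by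
  have hinv : HasFDerivAt (hΨ.localInverse Ψ Ψ' (y z₀)) (Ψ'.symm : P →L[𝕜] X) (p z₀) :=
    hy ▸ hΨ.to_localInverse.hasFDerivAt
  have hright : ∀ᶠ z in 𝓝 z₀, Ψ (hΨ.localInverse Ψ Ψ' (y z₀) (p z)) = p z :=
    hp.continuousAt.eventually (hy ▸ hΨ.eventually_right_inverse)
  exact (hinv.comp z₀ hp).congr_of_eventuallyEq
    (hright.mono fun z hz => (hunique z _ hz).symm)

end InverseFunction

section Superposition

variable {X E G : Type*} [TopologicalSpace X] [CompactSpace X]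
  [NormedAddCommGroup E] [NormedSpace ℝ E] [NormedAddCommGroup G] [NormedSpace ℝ G]

lemma hasStrictFDerivAt_comp_continuousMap {F : C(E, G)} {DF : C(E, E →L[ℝ] G)}
    (hF : ∀ x, HasFDerivAt F (DF x) x) (u : C(X, E)) :
    HasStrictFDerivAt (fun v : C(X, E) => F.comp v) (pointwiseCLM (DF.comp u)) u := by
  refine .of_isLittleO <| Asymptotics.isLittleO_iff.2 fun c hc => ?_
  -- `E` need not be locally compact, but `DF` is uniformly continuous at the compact set `u(X)`.
  obtain ⟨δ, hδ, hDF⟩ := Metric.mem_uniformity_dist.1 <|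
    (isCompact_range u.continuous).uniformContinuousAt_of_continuousAt DF
      (fun _ _ => DF.continuous.continuousAt) (Metric.dist_mem_uniformity hc)
  filter_upwards [prod_mem_nhds (Metric.ball_mem_nhds u hδ) (Metric.ball_mem_nhds u hδ)]
    with ⟨v, w⟩ ⟨hv, hw⟩
  refine (ContinuousMap.norm_le _ (by positivity)).2 fun x => ?_
  have hball : ∀ v' ∈ Metric.ball u δ, v' x ∈ Metric.ball (u x) δ := fun v' hv' =>
    (ContinuousMap.dist_apply_le_dist x).trans_lt hv'
  have hnear : ∀ e ∈ Metric.ball (u x) δ, ‖DF e - DF (u x)‖ ≤ c := fun e he => by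
    rw [← dist_eq_norm, dist_comm]
    exact (hDF (by rwa [dist_comm]) ⟨x, rfl⟩).le
  calc ‖F (v x) - F (w x) - DF (u x) (v x - w x)‖ ≤ c * ‖v x - w x‖ :=
        (convex_ball (u x) δ).norm_image_sub_le_of_norm_hasFDerivWithin_le'
          (fun e _ => (hF e).hasFDerivWithinAt)
          hnear (hball w hw) (hball v hv)
    _ ≤ c * ‖v - w‖ := by gcongr; exact (v - w).norm_coe_le_norm x

end Superposition

section Volterra

variable {E G : Type*} [NormedAddCommGroup E] [NormedSpace ℝ E]
  [NormedAddCommGroup G] [NormedSpace ℝ G]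
  {k : ℝ → G →L[ℝ] E} {T t C : ℝ} {f : ℝ → G}

lemma integral_kernel_apply_eq (k : ℝ → G →L[ℝ] E) (f : ℝ → G) (t : ℝ) :
    ∫ s in 0..t, k (t - s) (f s) = ∫ r in 0..t, k r (f (t - r)) := by
  simpa using
    intervalIntegral.integral_comp_sub_left (a := 0) (b := t) (fun r => k r (f (t - r))) t

lemma intervalIntegrable_kernel_apply (hk : IntervalIntegrable k volume 0 T)
    (ht : t ∈ Icc 0 T) (hf : Continuous f) (hC : ∀ s, ‖f s‖ ≤ C) :
    IntervalIntegrable (fun s => k (t - s) (f s)) volume 0 t := by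
  have hkt : IntervalIntegrable (fun s => k (t - s)) volume 0 t := by
    have hk0t : IntervalIntegrable k volume 0 t :=
      hk.mono_set (uIcc_subset_uIcc_left (uIcc_of_le (ht.1.trans ht.2) ▸ ht))
    simpa using (hk0t.comp_sub_left t).symm
  rw [intervalIntegrable_iff] at hkt ⊢
  exact (ContinuousLinearMap.id ℝ (G →L[ℝ] E)).integrable_of_bilin_of_bdd_right C hkt
    hf.aestronglyMeasurable (.of_forall hC)

lemma norm_integral_kernel_apply_le (hk : IntervalIntegrable k volume 0 T)
    (ht : t ∈ Icc 0 T) (hC : ∀ s, ‖f s‖ ≤ C) :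
    ‖∫ s in 0..t, k (t - s) (f s)‖ ≤ (∫ r in 0..T, ‖k r‖) * C := by
  have hC0 : 0 ≤ C := (norm_nonneg _).trans (hC 0)
  have hk0t : IntervalIntegrable k volume 0 t :=
    hk.mono_set (uIcc_subset_uIcc_left (uIcc_of_le (ht.1.trans ht.2) ▸ ht))
  calc ‖∫ s in 0..t, k (t - s) (f s)‖
      = ‖∫ r in 0..t, k r (f (t - r))‖ := by rw [integral_kernel_apply_eq]
    _ ≤ ∫ r in 0..t, ‖k r‖ * C :=
        intervalIntegral.norm_integral_le_of_norm_le ht.1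
          (.of_forall fun r _ => (k r).le_opNorm_of_le (hC _)) (hk0t.norm.mul_const C)
    _ = (∫ r in 0..t, ‖k r‖) * C := intervalIntegral.integral_mul_const ..
    _ ≤ (∫ r in 0..T, ‖k r‖) * C := by
        gcongr
        exact intervalIntegral.integral_mono_interval le_rfl ht.1 ht.2
          (.of_forall fun _ => norm_nonneg _) hk.norm

lemma continuous_integral_kernel_apply (hk : Integrable k) (hf : Continuous f)
    (hC : ∀ s, ‖f s‖ ≤ C) : Continuous fun t => ∫ r in 0..t, k r (f (t - r)) := by
  have hjoint : ∀ t, ContinuousAt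
      (fun p : ℝ × ℝ => ∫ r in 0..p.2, k r (f (p.1 - r))) (t, t) := fun t =>
    intervalIntegral.continuousAt_parametric_primitive_of_dominated
      (fun r => ‖k r‖ * C) (-|t| - 1) (|t| + 1)
      (fun t' => ((ContinuousLinearMap.id ℝ (G →L[ℝ] E)).aestronglyMeasurable_comp₂
        hk.aestronglyMeasurable (by fun_prop)).restrict)
      (.of_forall fun t' => .of_forall fun r => (k r).le_opNorm_of_le (hC _))
      (hk.norm.mul_const C).intervalIntegrable
      (.of_forall fun r => by fun_prop)
      ⟨by linarith [abs_nonneg t], by positivity⟩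
      ⟨by linarith [neg_abs_le t], by linarith [le_abs_self t]⟩ (measure_singleton t)
  exact continuous_iff_continuousAt.2 fun t =>
    (hjoint t).comp (f := fun t => (t, t)) (by fun_prop)

lemma continuousOn_integral_kernel_apply (hk : IntervalIntegrable k volume 0 T)
    (hf : Continuous f) (hC : ∀ s, ‖f s‖ ≤ C) :
    ContinuousOn (fun t => ∫ s in 0..t, k (t - s) (f s)) (Icc 0 T) := by
  have hcont := continuous_integral_kernel_apply
    (hk.1.integrable_indicator measurableSet_Ioc) hf hC
  refine hcont.continuousOn.congr fun t ht => ?_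
  calc ∫ s in 0..t, k (t - s) (f s) = ∫ r in 0..t, k r (f (t - r)) :=
        integral_kernel_apply_eq k f t
    _ = ∫ r in 0..t, (Ioc 0 T).indicator k r (f (t - r)) :=
        intervalIntegral.integral_congr_ae <| .of_forall fun r hr => by
          rw [uIoc_of_le ht.1] at hr
          simp only [indicator_of_mem (show r ∈ Ioc 0 T from ⟨hr.1, hr.2.trans ht.2⟩)]

/-- The Volterra operator `u ↦ (t ↦ ∫ s in 0..t, k (t - s) (u s))` on continuous functions. -/
def volterraCLM (hT : 0 ≤ T) (hk : IntervalIntegrable k volume 0 T) :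
    C(Icc 0 T, G) →L[ℝ] C(Icc 0 T, E) :=
  have hbdd (u : C(Icc 0 T, G)) (s : ℝ) : ‖IccExtend hT u s‖ ≤ ‖u‖ := u.norm_coe_le_norm _
  have hint (u : C(Icc 0 T, G)) {t : ℝ} (ht : t ∈ Icc 0 T) :=
    intervalIntegrable_kernel_apply hk ht u.continuous.Icc_extend' (hbdd u)
  LinearMap.mkContinuous
    { toFun := fun u => ⟨_, (continuousOn_integral_kernel_apply hk
        (u.continuous.Icc_extend' (h := hT)) (hbdd u)).domRestrict⟩
      map_add' := fun u v => by
        ext t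
        simpa [IccExtend_apply] using intervalIntegral.integral_add (hint u t.2) (hint v t.2)
      map_smul' := fun c u => by
        ext t
        simp [IccExtend_apply] }
    (∫ r in 0..T, ‖k r‖) fun u => (ContinuousMap.norm_le _ (by
      have := intervalIntegral.integral_nonneg (μ := volume) hT fun r _ => norm_nonneg (k r)
      positivity)).2 fun t => norm_integral_kernel_apply_le hk t.2 (hbdd u)

lemma volterraCLM_apply (hT : 0 ≤ T) (hk : IntervalIntegrable k volume 0 T)
    (u : C(Icc 0 T, G)) (t : Icc 0 T) :
    volterraCLM hT hk u t = ∫ s in (0 : ℝ)..t, k (t - s) (IccExtend hT u s) :=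
  rfl

lemma volterraCLM_apply_of_forall_eq (hT : 0 ≤ T) (hk : IntervalIntegrable k volume 0 T)
    {u : C(Icc 0 T, G)} (hu : ∀ s : Icc 0 T, u s = f s) (t : Icc 0 T) :
    volterraCLM hT hk u t = ∫ s in (0 : ℝ)..t, k (t - s) (f s) := by
  refine intervalIntegral.integral_congr fun s hs => ?_
  rw [uIcc_of_le t.2.1] at hs
  have hsT : s ∈ Icc 0 T := ⟨hs.1, hs.2.trans t.2.2⟩
  simp only [IccExtend_of_mem hT _ hsT, hu]

lemma continuousOn_volterra_integral (hT : 0 ≤ T) (hk : IntervalIntegrable k volume 0 T)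
    (hf : ContinuousOn f (Icc 0 T)) :
    ContinuousOn (fun t => ∫ s in 0..t, k (t - s) (f s)) (Icc 0 T) :=
  continuousOn_iff_continuous_domRestrict.2 <|
    (volterraCLM hT hk ⟨_, hf.domRestrict⟩).continuous.congr
      (volterraCLM_apply_of_forall_eq hT hk fun _ => rfl)

lemma eq_add_volterraCLM_iff (hT : 0 ≤ T) (hk : IntervalIntegrable k volume 0 T)
    {u v : C(Icc 0 T, E)} {w : C(Icc 0 T, G)} {a b : ℝ → E} (hu : ∀ s : Icc 0 T, u s = a s)
    (hv : ∀ s : Icc 0 T, v s = b s) (hw : ∀ s : Icc 0 T, w s = f s) :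
    u = v + volterraCLM hT hk w ↔
      ∀ t ∈ Icc 0 T, a t = b t + ∫ s in 0..t, k (t - s) (f s) := by
  simp only [ContinuousMap.ext_iff, ContinuousMap.add_apply, hu, hv,
    volterraCLM_apply_of_forall_eq hT hk hw, Subtype.forall]

lemma norm_volterraCLM_le (hT : 0 ≤ T) (hk : IntervalIntegrable k volume 0 T) :
    ‖volterraCLM hT hk‖ ≤ ∫ r in 0..T, ‖k r‖ := by
  have hnonneg := intervalIntegral.integral_nonneg (μ := volume) hT fun r _ => norm_nonneg (k r)
  unfold volterraCLM
  exact LinearMap.mkContinuous_norm_le _ hnonneg _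

end Volterra

section ExpWeight

variable {E G : Type*} [NormedAddCommGroup E] [NormedSpace ℝ E]
  [NormedAddCommGroup G] [NormedSpace ℝ G]
  {k : ℝ → G →L[ℝ] E} {T : ℝ}

lemma intervalIntegrable_exp_smul (hk : IntervalIntegrable k volume 0 T) (β : ℝ) :
    IntervalIntegrable (fun r => exp (-(β * r)) • k r) volume 0 T :=
  hk.continuousOn_smul (by fun_prop)

lemma tendsto_integral_norm_exp_smul (hT : 0 ≤ T) (hk : IntervalIntegrable k volume 0 T) :
    Tendsto (fun β => ∫ r in 0..T, ‖exp (-(β * r)) • k r‖) atTop (𝓝 0) := by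
  have hpos : ∀ᵐ r, r ∈ Ι 0 T → 0 < r := .of_forall fun r hr => (uIoc_of_le hT ▸ hr).1
  have hlim : ∀ᵐ r, r ∈ Ι 0 T →
      Tendsto (fun β : ℝ => ‖exp (-(β * r)) • k r‖) atTop (𝓝 0) := hpos.mono fun r hr hrT => by
    have hexp : Tendsto (fun β : ℝ => exp (-(β * r))) atTop (𝓝 0) :=
      tendsto_exp_neg_atTop_nhds_zero.comp (tendsto_id.atTop_mul_const (hr hrT))
    simpa using (hexp.smul_const (k r)).norm
  simpa using intervalIntegral.tendsto_integral_filter_of_dominated_convergence (‖k ·‖)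
    (.of_forall fun β => (intervalIntegrable_exp_smul hk β).norm.def'.aestronglyMeasurable)
    ((eventually_ge_atTop 0).mono fun β hβ => hpos.mono fun r hr hrT => by
      rw [norm_norm, norm_smul, Real.norm_of_nonneg (exp_pos _).le]
      exact mul_le_of_le_one_left (norm_nonneg _)
        (exp_le_one_iff.2 (neg_nonpos.2 (mul_nonneg hβ (hr hrT).le))))
    hk.norm hlim

variable (E T) in
/-- Multiplication by the weight `t ↦ exp (β t)`, as an invertible operator on `C([0, T], E)`.
Conjugating by it replaces a Volterra kernel `k` by `r ↦ exp (-β r) • k r`. -/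
def expWeight (β : ℝ) : (C(Icc 0 T, E) →L[ℝ] C(Icc 0 T, E))ˣ where
  val := pointwiseCLM ⟨fun t => exp (β * t) • ContinuousLinearMap.id ℝ E, by fun_prop⟩
  inv := pointwiseCLM ⟨fun t => exp (-(β * t)) • ContinuousLinearMap.id ℝ E, by fun_prop⟩
  val_inv := by ext u t; simp [smul_smul, ← exp_add]
  inv_val := by ext u t; simp [smul_smul, ← exp_add]

@[simp]
lemma expWeight_apply (β : ℝ) (u : C(Icc 0 T, E)) (t : Icc 0 T) :
    (expWeight E T β).val u t = exp (β * t) • u t :=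
  rfl

lemma volterraCLM_comp_expWeight (hT : 0 ≤ T) (hk : IntervalIntegrable k volume 0 T) (β : ℝ) :
    volterraCLM hT hk ∘L (expWeight G T β).val =
      (expWeight E T β).val ∘L volterraCLM hT (intervalIntegrable_exp_smul hk β) := by
  ext u t
  simp only [ContinuousLinearMap.comp_apply, expWeight_apply, volterraCLM_apply,
    ← intervalIntegral.integral_smul]
  refine intervalIntegral.integral_congr fun s hs => ?_
  rw [uIcc_of_le t.2.1] at hs
  have hsT : s ∈ Icc 0 T := ⟨hs.1, hs.2.trans t.2.2⟩
  simp [IccExtend_of_mem hT _ hsT, smul_smul, ← exp_add, mul_sub]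

lemma pointwiseCLM_comp_expWeight (M : C(Icc 0 T, E →L[ℝ] G)) (β : ℝ) :
    pointwiseCLM M ∘L (expWeight E T β).val = (expWeight G T β).val ∘L pointwiseCLM M := by
  ext u t
  simp

lemma isUnit_one_sub_volterraCLM_comp [CompleteSpace E] (hT : 0 ≤ T)
    (hk : IntervalIntegrable k volume 0 T) (M : C(Icc 0 T, E →L[ℝ] G)) :
    IsUnit (1 - volterraCLM hT hk ∘L pointwiseCLM M) := by
  obtain ⟨β, hβ⟩ : ∃ β : ℝ, (∫ r in 0..T, ‖exp (-(β * r)) • k r‖) * ‖M‖ < 1 :=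
    (((tendsto_integral_norm_exp_smul hT hk).mul_const ‖M‖).eventually_lt_const
      (by simp)).exists
  set Vβ := volterraCLM hT (intervalIntegrable_exp_smul hk β)
  set W := expWeight E T β
  have hsmall : ‖Vβ ∘L pointwiseCLM M‖ < 1 :=
    calc ‖Vβ ∘L pointwiseCLM M‖ ≤ ‖Vβ‖ * ‖pointwiseCLM M‖ := Vβ.opNorm_comp_le _
      _ ≤ ‖Vβ‖ * ‖M‖ := by gcongr; exact norm_pointwiseCLM_le M
      _ ≤ (∫ r in 0..T, ‖exp (-(β * r)) • k r‖) * ‖M‖ := by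
        gcongr; exact norm_volterraCLM_le hT _
      _ < 1 := hβ
  have hconj : (volterraCLM hT hk ∘L pointwiseCLM M) * W.val =
      W.val * (Vβ ∘L pointwiseCLM M) := by
    rw [ContinuousLinearMap.mul_def, ContinuousLinearMap.mul_def, ContinuousLinearMap.comp_assoc,
      pointwiseCLM_comp_expWeight, ← ContinuousLinearMap.comp_assoc, volterraCLM_comp_expWeight,
      ContinuousLinearMap.comp_assoc]
  have hweighted : IsUnit (1 - Vβ ∘L pointwiseCLM M) :=
    (Units.oneSub (Vβ ∘L pointwiseCLM M) hsmall).isUnit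
  refine W.isUnit_mul_units _ |>.1 ?_
  rw [sub_mul, hconj, one_mul]
  simpa [mul_sub] using W.isUnit.mul hweighted

end ExpWeight

section VolterraEquation

variable {E G Z : Type*} [NormedAddCommGroup E] [NormedSpace ℝ E] [CompleteSpace E]
  [NormedAddCommGroup G] [NormedSpace ℝ G] [NormedAddCommGroup Z] [NormedSpace ℝ Z]
  {k : ℝ → G →L[ℝ] E} {T : ℝ}

/-- The operator `u ↦ u - V (M u)` on `C([0, T], E)`, where `V` is the Volterra operator with
kernel `k` and `M` acts pointwise, as a continuous linear equivalence. Its inverse solves the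
linear Volterra equation `u = v + V (M u)`. -/
def oneSubVolterraEquiv (hT : 0 ≤ T) (hk : IntervalIntegrable k volume 0 T)
    (M : C(Icc 0 T, E →L[ℝ] G)) : C(Icc 0 T, E) ≃L[ℝ] C(Icc 0 T, E) :=
  ContinuousLinearEquiv.ofUnit (isUnit_one_sub_volterraCLM_comp hT hk M).unit

lemma oneSubVolterraEquiv_symm_eq_iff (hT : 0 ≤ T) (hk : IntervalIntegrable k volume 0 T)
    (M : C(Icc 0 T, E →L[ℝ] G)) {u v : C(Icc 0 T, E)} :
    u = (oneSubVolterraEquiv hT hk M).symm v ↔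
      u = v + volterraCLM hT hk (pointwiseCLM M u) := by
  rw [ContinuousLinearEquiv.eq_symm_apply, ← sub_eq_iff_eq_add]
  rfl

lemma hasFDerivAt_volterra_solution (hT : 0 ≤ T) (hk : IntervalIntegrable k volume 0 T)
    {F : C(E, G)} {DF : C(E, E →L[ℝ] G)} (hF : ∀ x, HasFDerivAt F (DF x) x)
    {p : Z → C(Icc 0 T, E)} {p' : Z →L[ℝ] C(Icc 0 T, E)} {z₀ : Z} (hp : HasFDerivAt p p' z₀)
    {y : Z → C(Icc 0 T, E)}
    (hy : ∀ z u, u = p z + volterraCLM hT hk (F.comp u) ↔ u = y z) :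
    HasFDerivAt y ((oneSubVolterraEquiv hT hk (DF.comp (y z₀))).symm.toContinuousLinearMap ∘L p')
      z₀ := by
  have hΨ : HasStrictFDerivAt (fun u => u - volterraCLM hT hk (F.comp u))
      (oneSubVolterraEquiv hT hk (DF.comp (y z₀)) : C(Icc 0 T, E) →L[ℝ] C(Icc 0 T, E)) (y z₀) :=
    (hasStrictFDerivAt_id _).sub ((volterraCLM hT hk).hasStrictFDerivAt.comp _
      (hasStrictFDerivAt_comp_continuousMap hF (y z₀)))
  exact hasFDerivAt_of_unique_solution hΨ hp (sub_eq_iff_eq_add.2 ((hy z₀ _).2 rfl))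
    fun z u hu => (hy z u).1 (sub_eq_iff_eq_add.1 hu)

lemma hasFDerivAt_domRestrict_volterra_solution (hT : 0 ≤ T) (hk : IntervalIntegrable k volume 0 T)
    {F : E → G} {DF : C(E, E →L[ℝ] G)} (hF : ∀ x, HasFDerivAt F (DF x) x)
    {p : Z → C(Icc 0 T, E)} {p' : Z →L[ℝ] C(Icc 0 T, E)} {z₀ : Z} (hp : HasFDerivAt p p' z₀)
    {b : Z → ℝ → E} (hpb : ∀ z (s : Icc 0 T), p z s = b z s)
    {y : Z → ℝ → E} (hy_cont : ∀ z, ContinuousOn (y z) (Icc 0 T))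
    (hy_sol : ∀ z, ∀ t ∈ Icc 0 T, y z t = b z t + ∫ s in 0..t, k (t - s) (F (y z s)))
    (hy_unique : ∀ z, ∀ u : ℝ → E, ContinuousOn u (Icc 0 T) →
      (∀ t ∈ Icc 0 T, u t = b z t + ∫ s in 0..t, k (t - s) (F (u s))) → EqOn u (y z) (Icc 0 T)) :
    HasFDerivAt (fun z => (⟨_, (hy_cont z).domRestrict⟩ : C(Icc 0 T, E)))
      ((oneSubVolterraEquiv hT hk
        (DF.comp ⟨_, (hy_cont z₀).domRestrict⟩)).symm.toContinuousLinearMap ∘L p') z₀ := by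
  let Fc : C(E, G) := ⟨F, continuous_iff_continuousAt.2 fun x => (hF x).continuousAt⟩
  refine hasFDerivAt_volterra_solution (F := Fc) hT hk hF hp fun z u => ?_
  constructor
  · intro hu
    ext t
    have hu_sol := (eq_add_volterraCLM_iff (a := IccExtend hT u) (f := F ∘ IccExtend hT u)
      hT hk (by simp) (hpb z) (by simp [Fc])).1 hu
    simpa using hy_unique z _ u.continuous.Icc_extend'.continuousOn hu_sol t.2
  · rintro rfl
    exact (eq_add_volterraCLM_iff hT hk (fun _ => rfl) (hpb z) fun _ => rfl).2 (hy_sol z)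

lemma forall_eq_add_integral_iff_eqOn (hT : 0 ≤ T) (hk : IntervalIntegrable k volume 0 T)
    {M : C(Icc 0 T, E →L[ℝ] G)} {A : ℝ → E →L[ℝ] G} (hM : ∀ s : Icc 0 T, M s = A s)
    {v : C(Icc 0 T, E)} {b : ℝ → E} (hv : ∀ s : Icc 0 T, v s = b s)
    {u : ℝ → E} (hu : ContinuousOn u (Icc 0 T)) :
    (∀ t ∈ Icc 0 T, u t = b t + ∫ s in 0..t, k (t - s) (A s (u s))) ↔
      EqOn u (IccExtend hT ((oneSubVolterraEquiv hT hk M).symm v)) (Icc 0 T) := by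
  rw [← eq_add_volterraCLM_iff (u := ⟨_, hu.domRestrict⟩)
    (w := pointwiseCLM M ⟨_, hu.domRestrict⟩) hT hk (fun _ => rfl) hv fun s => by simp [hM],
    ← oneSubVolterraEquiv_symm_eq_iff, ContinuousMap.ext_iff, Subtype.forall]
  exact forall₂_congr fun t ht => by simp [IccExtend_of_mem hT _ ht]

end VolterraEquation

section WeightedComposition

variable {ι κ 𝕜 : Type*} [NontriviallyNormedField 𝕜] {p : ENNReal} [Fact (1 ≤ p)]

lemma opNorm_le_of_apply_eq_mul_comp {A : lp (fun _ : κ => 𝕜) p →L[𝕜] lp (fun _ : ι => 𝕜) p}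
    {m : ι → 𝕜} {σ : ι → κ} (hσ : σ.Injective) (hA : ∀ x i, A x i = m i * x (σ i)) {C : ℝ}
    (hC : 0 ≤ C) (hm : ∀ i, ‖m i‖ ≤ C) : ‖A‖ ≤ C := by
  classical
  refine A.opNorm_le_bound hC fun x => ?_
  have hAx (i : ι) : ‖A x i‖ ≤ C * ‖x (σ i)‖ := by
    rw [hA, norm_mul]
    gcongr
    exact hm i
  rcases p.dichotomy with rfl | hp
  · exact lp.norm_le_of_forall_le (by positivity) fun i => (hAx i).trans <| by
      gcongr
      exact lp.norm_apply_le_norm ENNReal.top_ne_zero x _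
  have hp0 : 0 < p.toReal := zero_lt_one.trans_le hp
  refine lp.norm_le_of_forall_sum_le hp0 (by positivity) fun s => ?_
  calc ∑ i ∈ s, ‖A x i‖ ^ p.toReal ≤ ∑ i ∈ s, (C * ‖x (σ i)‖) ^ p.toReal := by
        gcongr with i
        exact hAx i
    _ = C ^ p.toReal * ∑ j ∈ s.image σ, ‖x j‖ ^ p.toReal := by
        simp only [Finset.sum_image hσ.injOn, Finset.mul_sum,
          mul_rpow hC (norm_nonneg _)]
    _ ≤ C ^ p.toReal * ‖x‖ ^ p.toReal := by
        gcongr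
        exact lp.sum_rpow_le_norm_rpow hp0 x _
    _ = (C * ‖x‖) ^ p.toReal := (mul_rpow hC (norm_nonneg x)).symm

end WeightedComposition

section HeatGradient

/-- The family `K t = D_ξ e^{tA}`, `t > 0`, in the trigonometric basis: differentiation swaps the
frequencies `k` and `-k` with weight `-k`. Nothing is said about `K t` for `t ≤ 0`. -/
def IsHeatGradient (K : ℝ → H →L[ℝ] H) : Prop :=
  ∀ t, 0 < t → ∀ (x : H) (k : ℤ),
    K t x k = -(k : ℝ) * exp (-(1 + (k : ℝ) ^ 2) * t) * x (-k)

variable {K : ℝ → H →L[ℝ] H} {r s t : ℝ}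

lemma abs_mul_exp_neg_le_rpow (ξ : ℝ) (ht : 0 < t) :
    |ξ| * exp (-(1 + ξ ^ 2) * t) ≤ t ^ (-1 / 2 : ℝ) := by
  have hmul : |ξ| * √t ≤ exp ((1 + ξ ^ 2) * t) :=
    calc |ξ| * √t ≤ ξ ^ 2 * t + 1 := by
          nlinarith [sq_nonneg (|ξ| * √t - 1), sq_abs ξ, sq_sqrt ht.le, sq_nonneg (|ξ| * √t)]
      _ ≤ exp (ξ ^ 2 * t) := add_one_le_exp _
      _ ≤ exp ((1 + ξ ^ 2) * t) := by gcongr; linarith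
  rw [neg_div, rpow_neg ht.le, ← sqrt_eq_rpow, neg_mul, exp_neg, ← div_eq_mul_inv, ← one_div,
    div_le_div_iff₀ (exp_pos _) (sqrt_pos.2 ht), one_mul]
  exact hmul

lemma sq_mul_exp_neg_le {a : ℝ} (ha : 0 ≤ a) (hr : 0 < r) : a ^ 2 * exp (-a * r) ≤ 2 / r ^ 2 := by
  have hquad := quadratic_le_exp_of_nonneg (mul_nonneg ha hr.le)
  rw [neg_mul, exp_neg, ← div_eq_mul_inv, div_le_div_iff₀ (exp_pos _) (by positivity)]
  nlinarith [mul_nonneg ha hr.le]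

lemma abs_mul_exp_neg_sub_le (ξ : ℝ) (hr : 0 < r) (hs : r ≤ s) (ht : r ≤ t) :
    |ξ * exp (-(1 + ξ ^ 2) * t) - ξ * exp (-(1 + ξ ^ 2) * s)| ≤ 2 / r ^ 2 * |t - s| := by
  have hderiv (τ : ℝ) : HasDerivAt (fun τ => ξ * exp (-(1 + ξ ^ 2) * τ))
      (ξ * (exp (-(1 + ξ ^ 2) * τ) * -(1 + ξ ^ 2))) τ := by
    simpa only [id, mul_one] using
      (((hasDerivAt_id τ).const_mul (-(1 + ξ ^ 2))).exp).const_mul ξ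
  have hbound (τ : ℝ) (hτ : τ ∈ Ici r) :
      ‖ξ * (exp (-(1 + ξ ^ 2) * τ) * -(1 + ξ ^ 2))‖ ≤ 2 / r ^ 2 := by
    have hξ : |ξ| ≤ 1 + ξ ^ 2 := by nlinarith [sq_nonneg (|ξ| - 1), sq_abs ξ]
    calc ‖ξ * (exp (-(1 + ξ ^ 2) * τ) * -(1 + ξ ^ 2))‖
        = |ξ| * (1 + ξ ^ 2) * exp (-(1 + ξ ^ 2) * τ) := by
          rw [norm_mul, norm_mul, norm_neg, norm_of_nonneg (exp_pos _).le,
            norm_of_nonneg (by positivity : 0 ≤ 1 + ξ ^ 2), norm_eq_abs]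
          ring
      _ ≤ (1 + ξ ^ 2) ^ 2 * exp (-(1 + ξ ^ 2) * r) := by
          rw [sq (1 + ξ ^ 2), neg_mul, neg_mul]
          gcongr
          exact hτ
      _ ≤ 2 / r ^ 2 := sq_mul_exp_neg_le (by positivity) hr
  exact (convex_Ici r).norm_image_sub_le_of_norm_hasDerivWithin_le
    (fun τ _ => (hderiv τ).hasDerivWithinAt) hbound hs ht

lemma norm_heatGradient_le (hK : IsHeatGradient K) (ht : 0 < t) :
    ‖K t‖ ≤ t ^ (-1 / 2 : ℝ) :=
  opNorm_le_of_apply_eq_mul_comp neg_injective (hK t ht) (by positivity) fun k => by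
    simpa using abs_mul_exp_neg_le_rpow k ht

lemma continuousOn_heatGradient (hK : IsHeatGradient K) :
    ContinuousOn K (Ioi 0) := by
  have hlip (r : ℝ) (hr : 0 < r) : LipschitzOnWith (2 / r ^ 2).toNNReal K (Ici r) := by
    refine .of_dist_le' fun t ht s hs => ?_
    rw [dist_eq_norm, dist_eq]
    refine opNorm_le_of_apply_eq_mul_comp (p := 2) (ι := ℤ) neg_injective
      (m := fun k => -(k : ℝ) * exp (-(1 + (k : ℝ) ^ 2) * t) -
        -(k : ℝ) * exp (-(1 + (k : ℝ) ^ 2) * s))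
      (fun x k => ?_) (by positivity) fun k => ?_
    · rw [sub_mul, ← hK t (hr.trans_le ht), ← hK s (hr.trans_le hs)]
      rfl
    · simpa using abs_mul_exp_neg_sub_le (-k : ℝ) hr hs ht
  exact fun t ht => ((hlip (t / 2) (half_pos ht)).continuousOn.continuousAt
    (Ici_mem_nhds (half_lt_self ht))).continuousWithinAt

lemma intervalIntegrable_heatGradient (hK : IsHeatGradient K) {T : ℝ} (hT : 0 ≤ T) :
    IntervalIntegrable K volume 0 T := by
  have hpos : Ι 0 T ⊆ Ioi 0 := by
    rw [uIoc_of_le hT]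
    exact Ioc_subset_Ioi_self
  exact (intervalIntegral.intervalIntegrable_rpow' (r := -1 / 2) (by norm_num)).mono_fun'
    (((continuousOn_heatGradient hK).mono hpos).aestronglyMeasurable measurableSet_uIoc)
    ((ae_restrict_iff' measurableSet_uIoc).2 <|
      .of_forall fun t ht => norm_heatGradient_le hK (hpos ht))

end HeatGradient

theorem stmt_9_general {E G Z : Type*} [NormedAddCommGroup E] [NormedSpace ℝ E] [CompleteSpace E]
    [NormedAddCommGroup G] [NormedSpace ℝ G]
    [NormedAddCommGroup Z] [NormedSpace ℝ Z] [CompleteSpace Z]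
    {S : ℝ → Z →L[ℝ] E} {K : ℝ → G →L[ℝ] E} {F : E → G} {DF : E → E →L[ℝ] G} {T : ℝ}
    (hK : IntervalIntegrable K volume 0 T)
    (hDF : ∀ x, HasFDerivAt F (DF x) x) (hDF_cont : Continuous DF)
    {g : ℝ → E} (hg : ContinuousOn g (Icc 0 T))
    {y : Z → ℝ → E} (hy_cont : ∀ x, ContinuousOn (y x) (Icc 0 T))
    (hy_sol : ∀ x, ∀ t ∈ Icc 0 T,
      y x t = S t x + (∫ s in 0..t, K (t - s) (F (y x s))) + g t)
    (hy_unique : ∀ x, ∀ z : ℝ → E, ContinuousOn z (Icc 0 T) →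
      (∀ t ∈ Icc 0 T, z t = S t x + (∫ s in 0..t, K (t - s) (F (z s))) + g t) →
      ∀ t ∈ Icc 0 T, z t = y x t) :
    ∀ t ∈ Icc 0 T, ∀ x, ∃ L : Z →L[ℝ] E, HasFDerivAt (fun z => y z t) L x ∧
      ∀ h, ∃ η : ℝ → E, ContinuousOn η (Icc 0 T) ∧
        (∀ τ ∈ Icc 0 T, η τ = S τ h + ∫ s in 0..τ, K (τ - s) (DF (y x s) (η s))) ∧
        (∀ η' : ℝ → E, ContinuousOn η' (Icc 0 T) →
          (∀ τ ∈ Icc 0 T, η' τ = S τ h + ∫ s in 0..τ, K (τ - s) (DF (y x s) (η' s))) →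
          ∀ τ ∈ Icc 0 T, η' τ = η τ) ∧
        L h = η t := by
  intro t ht x
  have hT : 0 ≤ T := ht.1.trans ht.2
  have hF : Continuous F := continuous_iff_continuousAt.2 fun e => (hDF e).continuousAt
  have hS (z : Z) : ContinuousOn (fun τ => S τ z) (Icc 0 T) :=
    (((hy_cont z).sub (continuousOn_volterra_integral hT hK (hF.comp_continuousOn (hy_cont z)))).sub
      hg).congr fun τ hτ => by
      simp only [Pi.sub_apply, Function.comp_apply, hy_sol z τ hτ]
      abel
  let p (τ : Icc 0 T) : Z →L[ℝ] E := S τ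
  have hp (z : Z) : Continuous fun τ => p τ z := (hS z).domRestrict
  have hderiv := hasFDerivAt_domRestrict_volterra_solution (DF := ⟨DF, hDF_cont⟩) (z₀ := x)
    (p := fun z => orbitCLM p hp z + ⟨_, hg.domRestrict⟩) (b := fun z τ => S τ z + g τ) hT hK hDF
    ((orbitCLM p hp).hasFDerivAt.add_const _) (fun _ _ => rfl) hy_cont
    (by simpa only [add_right_comm] using hy_sol)
    (by simpa only [add_right_comm, EqOn] using hy_unique)
  let eval : C(Icc 0 T, E) →L[ℝ] E := ContinuousMap.evalCLM ℝ ⟨t, ht⟩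
  refine ⟨_, eval.hasFDerivAt.comp x hderiv, fun h => ?_⟩
  let M : C(Icc 0 T, E →L[ℝ] G) := ⟨_, (hDF_cont.comp_continuousOn (hy_cont x)).domRestrict⟩
  let u : C(Icc 0 T, E) := (oneSubVolterraEquiv hT hK M).symm (orbitCLM p hp h)
  have hu_cont : ContinuousOn (IccExtend hT u) (Icc 0 T) := u.continuous.Icc_extend'.continuousOn
  have hη {η : ℝ → E} (hη_cont : ContinuousOn η (Icc 0 T)) :=
    forall_eq_add_integral_iff_eqOn (M := M) (A := fun s => DF (y x s)) (v := orbitCLM p hp h)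
      (b := fun τ => S τ h) hT hK (fun _ => rfl) (fun _ => rfl) hη_cont
  exact ⟨IccExtend hT u, hu_cont, (hη hu_cont).2 fun _ _ => rfl, fun η' hη' => (hη hη').1,
    (IccExtend_of_mem hT u ht).symm⟩

/-- Differentiability of the (pathwise) mild solution with respect to the initial datum:
with `S(t)`, `K(t)` as in the text, `F` Fréchet differentiable with continuous bounded
derivative `DF`, and `y(·,x)` the unique continuous solution of
`y(t,x) = S(t)x + ∫₀ᵗ K(t−s)F(y(s,x))ds + g(t)`, for every `t ∈ [0,T]` the map
`x ↦ y(t,x)` is Fréchet differentiable and its derivative in direction `h` is `η^h(t,x)`,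
the unique continuous solution of `η(t) = S(t)h + ∫₀ᵗ K(t−s)(DF(y(s,x))·η(s))ds`. -/
theorem stmt_9 (S K : ℝ → H →L[ℝ] H)
    (hS : ∀ t : ℝ, 0 ≤ t → ∀ (x : H) (k : ℤ),
      (S t x) k = Real.exp (-(1 + (k : ℝ) ^ 2) * t) * x k)
    (hK : ∀ t : ℝ, 0 < t → ∀ (x : H) (k : ℤ),
      (K t x) k = -(k : ℝ) * Real.exp (-(1 + (k : ℝ) ^ 2) * t) * x (-k))
    (F : H → H) (DF : H → H →L[ℝ] H)
    (hDF : ∀ x : H, HasFDerivAt F (DF x) x)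
    (hDF_cont : Continuous DF)
    (hDF_bdd : ∃ C : ℝ, ∀ x : H, ‖DF x‖ ≤ C)
    (T : ℝ) (hT : 0 < T)
    (g : ℝ → H) (hg : ContinuousOn g (Set.Icc 0 T))
    (y : H → ℝ → H)
    (hy_cont : ∀ x : H, ContinuousOn (y x) (Set.Icc 0 T))
    (hy_sol : ∀ x : H, ∀ t ∈ Set.Icc (0 : ℝ) T,
      y x t = S t x + (∫ s in (0 : ℝ)..t, K (t - s) (F (y x s))) + g t)
    (hy_unique : ∀ x : H, ∀ z : ℝ → H,
      ContinuousOn z (Set.Icc 0 T) →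
      (∀ t ∈ Set.Icc (0 : ℝ) T,
        z t = S t x + (∫ s in (0 : ℝ)..t, K (t - s) (F (z s))) + g t) →
      ∀ t ∈ Set.Icc (0 : ℝ) T, z t = y x t) :
    ∀ t ∈ Set.Icc (0 : ℝ) T, ∀ x : H,
      ∃ L : H →L[ℝ] H, HasFDerivAt (fun z => y z t) L x ∧
        ∀ h : H, ∃ η : ℝ → H,
          ContinuousOn η (Set.Icc 0 T) ∧
          (∀ τ ∈ Set.Icc (0 : ℝ) T,
            η τ = S τ h + ∫ s in (0 : ℝ)..τ, K (τ - s) (DF (y x s) (η s))) ∧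
          (∀ η' : ℝ → H, ContinuousOn η' (Set.Icc 0 T) →
            (∀ τ ∈ Set.Icc (0 : ℝ) T,
              η' τ = S τ h + ∫ s in (0 : ℝ)..τ, K (τ - s) (DF (y x s) (η' s))) →
            ∀ τ ∈ Set.Icc (0 : ℝ) T, η' τ = η τ) ∧
          L h = η t := by
  exact stmt_9_general (intervalIntegrable_heatGradient hK hT.le) hDF hDF_cont hg hy_cont hy_sol
    hy_unique
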